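/- The function d[l] : S × S → [0,∞] is a metric on S: for all x, y, z ∈ S, (a) d[l](x,y) < ∞; (b) d[l](x,y) ≥ 0; (c) d[l](x,y) = 0 if and only if x = y; (d) d[l](x,y) = d[l](y,x); (e) d[l](x,z) ≤ d[l](x,y) + d[l](y,z). -/

import Mathlib

noncomputable section

open Set
open scoped ENNReal

/-- The Euclidean plane `ℝ²` with the Euclidean metric. -/
abbrev E2 : Type := EuclideanSpace ℝ (Fin 2)

/-- Vertices of the fixed closed regular (equilateral) triangle of side length 1. -/
def p0 : E2 := !₂[0, 0]
def p1 : E2 := !₂[1, 0]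
def p2 : E2 := !₂[1 / 2, Real.sqrt 3 / 2]

/-- `Dtri` is the fixed closed regular triangle in `ℝ²` with edge length 1. -/
def Dtri : Set E2 := convexHull ℝ {p0, p1, p2}

/-- `V0` is the set of the three vertices of `Dtri`. -/
def V0 : Set E2 := {p0, p1, p2}

/-- The three closed edges of `Dtri`. -/
def e01 : Set E2 := segment ℝ p0 p1
def e12 : Set E2 := segment ℝ p1 p2
def e02 : Set E2 := segment ℝ p0 p2

/-- `E0` is the set of the three closed edges of `Dtri`. -/
def E0 : Set (Set E2) := {e01, e12, e02}

/-- The open edge `e° = e ∖ V₀`. -/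
def eo (e : Set E2) : Set E2 := e \ V0

/-- `Do = D°` is the interior of `Dtri` in `ℝ²`. -/
def Do : Set E2 := interior Dtri

/-- `l : E₀ → ℝ` is positive and satisfies the strict triangle inequalities:
`l e₁ + l e₂ > l e₃` whenever `{e₁, e₂, e₃} = E₀`. -/
def TriIneq (l : Set E2 → ℝ) : Prop :=
  (∀ e ∈ E0, 0 < l e) ∧
  ∀ e₁ e₂ e₃ : Set E2, ({e₁, e₂, e₃} : Set (Set E2)) = E0 → l e₁ + l e₂ > l e₃

/-- A linear map `f : ℝ² → ℝ²` realizes the edge lengths `l`, i.e. for each `e ∈ E₀`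
the segment `f(e)` has Euclidean length `l e`. -/
def Realizes (f : E2 →ₗ[ℝ] E2) (l : Set E2 → ℝ) : Prop :=
  dist (f p0) (f p1) = l e01 ∧ dist (f p1) (f p2) = l e12 ∧ dist (f p0) (f p2) = l e02

/-- The metric `d[l]` on `Dtri`, defined by `d[l](x,y) = |f x - f y|₂` for a linear map `f`
realizing the edge lengths `l` (this is independent of the choice of `f`). -/
def dD (l : Set E2 → ℝ) (x y : E2) : ℝ :=
  letI := Classical.propDecidable (∃ f : E2 →ₗ[ℝ] E2, Realizes f l)
  if h : ∃ f : E2 →ₗ[ℝ] E2, Realizes f l then dist (h.choose x) (h.choose y) else 0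

/-- A triangulation `T = (σᵢ)_{i ∈ I}`, `I = Fin n`, of a topological space `S`:
a finite family of continuous maps `σᵢ : Dtri → S` such that
(a) `σᵢ` is injective on each open edge, (b) `σᵢ` is injective on `D°`,
(c) `S` is the disjoint union of `⋃ᵢ σᵢ(V₀)`, the sets `σᵢ(D°)`, and the distinct sets
among the `σᵢ(e°)`, and (d) glued edges are identified by a linear homeomorphism. -/
structure Triangulation (S : Type) [TopologicalSpace S] (n : ℕ) where
  σ : Fin n → E2 → S
  continuousOn : ∀ i, ContinuousOn (σ i) Dtri
  inj_edge : ∀ i, ∀ e ∈ E0, InjOn (σ i) (eo e)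
  inj_int : ∀ i, InjOn (σ i) Do
  cover : (⋃ i, σ i '' V0) ∪ (⋃ i, σ i '' Do) ∪ (⋃ i, ⋃ e ∈ E0, σ i '' eo e) = univ
  disj_int : ∀ i j, i ≠ j → Disjoint (σ i '' Do) (σ j '' Do)
  disj_vert_int : ∀ j, Disjoint (⋃ i, σ i '' V0) (σ j '' Do)
  disj_vert_edge : ∀ j, ∀ e ∈ E0, Disjoint (⋃ i, σ i '' V0) (σ j '' eo e)
  disj_int_edge : ∀ i j, ∀ e ∈ E0, Disjoint (σ i '' Do) (σ j '' eo e)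
  edge_eq_or_disjoint : ∀ i j, ∀ e ∈ E0, ∀ e' ∈ E0,
    σ i '' eo e = σ j '' eo e' ∨ Disjoint (σ i '' eo e) (σ j '' eo e')
  glue : ∀ i j, ∀ e ∈ E0, ∀ e' ∈ E0, σ i '' eo e = σ j '' eo e' →
    ∃ A : E2 →ᵃ[ℝ] E2, A '' e = e' ∧ ∀ x ∈ e, σ j (A x) = σ i x

variable {S : Type} [TopologicalSpace S] {n : ℕ}

/-- `l ∈ ℝ^{E(T)}_Δ`: `l` assigns positive lengths to the edges of `T` satisfying the
strict triangle inequalities in each triangle. -/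
def TriIneqT (T : Triangulation S n) (l : Set S → ℝ) : Prop :=
  (∀ (i : Fin n), ∀ e ∈ E0, 0 < l (T.σ i '' e)) ∧
  ∀ (i : Fin n), ∀ e₁ e₂ e₃ : Set E2, ({e₁, e₂, e₃} : Set (Set E2)) = E0 →
    l (T.σ i '' e₁) + l (T.σ i '' e₂) > l (T.σ i '' e₃)

/-- The restricted edge lengths `l^{(i)}` on the triangle `σᵢ(D)`: `l^{(i)}_e = l_{σᵢ(e)}`. -/
def lRes (T : Triangulation S n) (l : Set S → ℝ) (i : Fin n) : Set E2 → ℝ :=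
  fun e => l (T.σ i '' e)

/-- `dᵢ(x,y) = min { d[l^{(i)}](x',y') : x' ∈ σᵢ⁻¹(x), y' ∈ σᵢ⁻¹(y) }` for `x, y ∈ σᵢ(D)`. -/
def dTri (T : Triangulation S n) (l : Set S → ℝ) (i : Fin n) (x y : S) : ℝ :=
  sInf { r | ∃ x' ∈ Dtri, ∃ y' ∈ Dtri,
    T.σ i x' = x ∧ T.σ i y' = y ∧ r = dD (lRes T l i) x' y' }

/-- The set of sums `Σ_j d_{i_j}(x_{j-1}, x_j)` over chains from `x` to `y`. -/
def chainSums (T : Triangulation S n) (l : Set S → ℝ) (x y : S) : Set ℝ :=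
  { r | ∃ (k : ℕ) (c : ℕ → S) (idx : ℕ → Fin n),
      c 0 = x ∧ c k = y ∧
      (∀ j < k, c j ∈ T.σ (idx j) '' Dtri ∧ c (j + 1) ∈ T.σ (idx j) '' Dtri) ∧
      r = ∑ j ∈ Finset.range k, dTri T l (idx j) (c j) (c (j + 1)) }

/-- The glued metric `d[l]` on `S`. -/
def dGlue (T : Triangulation S n) (l : Set S → ℝ) (x y : S) : ℝ :=
  sInf (chainSums T l x y)

/-!
Separation of points is the crux. A linear map realizing admissible edge lengths is injective,
hence bi-Lipschitz, so a function on `S` that is `C¹` on every triangle is Lipschitz for each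
`dTri`, and, by summing along chains, Lipschitz for `dGlue`. Such functions therefore agree at
points whose `dGlue`-distance is `0`, and there are enough of them to separate the points of `S`:
piecewise linear hat functions for the vertices, cubics attached to an oriented edge for the
points of that edge, and multiples of the cubic bubble of a triangle for its interior points.

Chains joining any two points exist because a finite closed cover of a connected space cannot be
split into two nonempty subfamilies with disjoint unions.
-/

open scoped NNReal Pointwise Topology

section General

theorem le_mul_csInf {s : Set ℝ} {a C : ℝ} (hs : s.Nonempty) (hC : 0 ≤ C)
    (h : ∀ r ∈ s, a ≤ C * r) : a ≤ C * sInf s := by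
  rw [← smul_eq_mul, ← Real.sInf_smul_of_nonneg hC]
  refine le_csInf hs.smul_set ?_
  rintro _ ⟨r, hr, rfl⟩
  exact h r hr

theorem rel_of_finite_closed_cover {X ι : Type*} [TopologicalSpace X]
    [PreconnectedSpace X] [Finite ι] {K : ι → Set X} (hK : ∀ i, IsClosed (K i))
    (hcover : ∀ x, ∃ i, x ∈ K i) {r : X → X → Prop} [IsTrans X r]
    (hr : ∀ i, ∀ x ∈ K i, ∀ y ∈ K i, r x y) (x y : X) : r x y := by
  refine PreconnectedSpace.induction₂' r (fun x => ?_) inferInstance x y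
  filter_upwards [(locallyFinite_of_finite K).eventually_subset hK x] with y hxy
  obtain ⟨i, hy⟩ := hcover y
  have hx : x ∈ K i := hxy hy
  exact ⟨hr i x hx y hy, hr i y hy x hx⟩

theorem right_eq_of_segment_eq_segment {𝕜 E : Type*} [Field 𝕜] [LinearOrder 𝕜]
    [IsStrictOrderedRing 𝕜] [AddCommGroup E] [Module 𝕜 E] {x y z : E}
    (h : segment 𝕜 x y = segment 𝕜 x z) : y = z := by
  have hy : Wbtw 𝕜 x y z := mem_segment_iff_wbtw.1 (h ▸ right_mem_segment 𝕜 x y)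
  have hz : Wbtw 𝕜 x z y := mem_segment_iff_wbtw.1 (h ▸ right_mem_segment 𝕜 x z)
  exact hy.swap_right_iff.1 hz

theorem endpoints_eq_of_segment_eq_segment {𝕜 E : Type*} [Field 𝕜] [LinearOrder 𝕜]
    [IsStrictOrderedRing 𝕜] [AddCommGroup E] [Module 𝕜 E] {x y u v : E}
    (h : segment 𝕜 x y = segment 𝕜 u v) :
    x = u ∧ y = v ∨ x = v ∧ y = u := by
  have hx : Wbtw 𝕜 u x v := mem_segment_iff_wbtw.1 (h ▸ left_mem_segment 𝕜 x y)
  have hy : Wbtw 𝕜 u y v := mem_segment_iff_wbtw.1 (h ▸ right_mem_segment 𝕜 x y)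
  have hu : Wbtw 𝕜 x u y := mem_segment_iff_wbtw.1 (h ▸ left_mem_segment 𝕜 u v)
  rcases eq_or_ne u v with rfl | huv
  · exact Or.inl ⟨(wbtw_self_iff 𝕜).1 hx, (wbtw_self_iff 𝕜).1 hy⟩
  have hray : SameRay 𝕜 (x -ᵥ u) (y -ᵥ u) :=
    hx.sameRay_vsub_left.trans hy.sameRay_vsub_left.symm fun h0 =>
      absurd (vsub_eq_zero_iff_eq.1 h0).symm huv
  rcases wbtw_total_of_sameRay_vsub_left hray with hxy | hyx
  · obtain rfl : u = x := hxy.swap_left_iff.1 hu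
    exact Or.inl ⟨rfl, right_eq_of_segment_eq_segment h⟩
  · obtain rfl : u = y := hyx.swap_left_iff.1 hu.symm
    exact Or.inr ⟨right_eq_of_segment_eq_segment ((segment_symm 𝕜 u x).trans h), rfl⟩

theorem not_collinear_of_dist_lt {V P : Type*} [SeminormedAddCommGroup V] [NormedSpace ℝ V]
    [PseudoMetricSpace P] [NormedAddTorsor V P] {x y z : P} (hx : dist y z < dist x y + dist x z)
    (hy : dist x z < dist x y + dist y z) (hz : dist x y < dist x z + dist y z) :
    ¬ Collinear ℝ {x, y, z} := by
  intro h
  rcases h.wbtw_or_wbtw_or_wbtw with h | h | h <;>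
    linarith [h.dist_add_dist, dist_comm x y, dist_comm y z, dist_comm x z]

theorem exists_dist_eq_of_triangle_le {E : Type*} [NormedAddCommGroup E] [NormedSpace ℝ E]
    (hE : 1 < Module.rank ℝ E) {a b c : ℝ} (ha : a ≤ b + c) (hb : b ≤ a + c) (hc : c ≤ a + b) :
    ∃ x y z : E, dist x y = a ∧ dist y z = b ∧ dist x z = c := by
  have ha0 : 0 ≤ a := by linarith
  have hc0 : 0 ≤ c := by linarith
  have : Nontrivial E := rank_pos_iff_nontrivial.1 (zero_lt_one.trans hE)
  obtain ⟨e, he⟩ := exists_norm_eq E zero_le_one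
  have hsphere : ∀ s : ℝ, |s| = c → s • e ∈ Metric.sphere (0 : E) c := fun s hs => by
    simp [norm_smul, he, hs]
  have hdist : ∀ s : ℝ, dist (a • e) (s • e) = |a - s| := fun s => by
    rw [dist_eq_norm, ← sub_smul, norm_smul, he, mul_one, Real.norm_eq_abs]
  -- On the connected sphere of radius `c`, the distance from `a • e` takes the values `|a - c|`
  -- and `a + c`.
  obtain ⟨z, hz, hbz⟩ : b ∈ dist (a • e) '' Metric.sphere (0 : E) c := by
    refine (isPreconnected_sphere hE 0 c).intermediate_value (hsphere c (abs_of_nonneg hc0))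
      (hsphere (-c) (by rw [abs_neg, abs_of_nonneg hc0])) (by fun_prop) ?_
    rw [hdist, hdist, sub_neg_eq_add, abs_of_nonneg (add_nonneg ha0 hc0)]
    exact ⟨abs_le.2 ⟨by linarith, by linarith⟩, hb⟩
  refine ⟨0, a • e, z, ?_, hbz, ?_⟩
  · rw [dist_zero_left, norm_smul, he, mul_one, Real.norm_of_nonneg ha0]
  · rwa [dist_comm]

variable {ι k V P : Type*} [AddCommGroup V] [AddTorsor V P]

theorem coord_lineMap_basis [CommRing k] [Module k V] [DecidableEq ι] (b : AffineBasis ι k P)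
    (i j c : ι) (t : k) :
    b.coord c (AffineMap.lineMap (b i) (b j) t) =
      (1 - t) * (if c = i then 1 else 0) + t * (if c = j then 1 else 0) := by
  rw [AffineMap.apply_lineMap, AffineMap.lineMap_apply_ring, b.coord_apply, b.coord_apply]

theorem eq_lineMap_of_coord_eq_zero [CommRing k] [Module k V] [Finite ι] (b : AffineBasis ι k P)
    {i j : ι} (hij : i ≠ j) {p : P} (h : ∀ c, c ≠ i ∧ c ≠ j → b.coord c p = 0) :
    p = AffineMap.lineMap (b i) (b j) (b.coord j p) := by
  classical
  cases nonempty_fintype ι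
  have hsum : b.coord i p + b.coord j p = 1 := by
    rw [← Fintype.sum_eq_add i j hij h, b.sum_coord_apply_eq_one]
  refine b.ext_elem fun c => ?_
  rw [coord_lineMap_basis]
  rcases eq_or_ne c i with rfl | hci
  · rw [if_pos rfl, if_neg hij]
    linear_combination hsum
  rcases eq_or_ne c j with rfl | hcj
  · simp [hci]
  · simp [hci, hcj, h c ⟨hci, hcj⟩]

theorem exists_linearMap_vsub_eq {V' P' : Type*} [CommRing k] [Module k V] [AddCommGroup V']
    [Module k V'] [AddTorsor V' P'] (b : AffineBasis ι k P) (q : ι → P') :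
    ∃ f : V →ₗ[k] V', ∀ i j, f (b i -ᵥ b j) = q i -ᵥ q j := by
  obtain ⟨o⟩ := b.nonempty
  let f : V →ₗ[k] V' := (b.basisOf o).constr k fun j => q j -ᵥ q o
  have hf : ∀ i, f (b i -ᵥ b o) = q i -ᵥ q o := fun i => by
    rcases eq_or_ne i o with rfl | hi
    · simp
    · simpa using (b.basisOf o).constr_basis k (fun j => q j -ᵥ q o) ⟨i, hi⟩
  refine ⟨f, fun i j => ?_⟩
  rw [← vsub_sub_vsub_cancel_right (b i) (b j) (b o), map_sub, hf, hf, vsub_sub_vsub_cancel_right]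

theorem injective_of_affineIndependent_image {V' : Type*} [CommRing k] [Module k V]
    [AddCommGroup V'] [Module k V'] (b : AffineBasis ι k V) (f : V →ₗ[k] V')
    (h : AffineIndependent k fun i => f (b i)) : Function.Injective f := by
  obtain ⟨o⟩ := b.nonempty
  rw [affineIndependent_iff_linearIndependent_vsub k _ o] at h
  have := (b.basisOf o).injective_constr_of_linearIndependent (R₂ := k) h
  rwa [(b.basisOf o).constr_eq k (f := f) fun j => by simp] at this

end General

section ReferenceTriangle

theorem dist_p0_p1 : dist p0 p1 = 1 := by
  simp [p0, p1, EuclideanSpace.dist_eq, Fin.sum_univ_two]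

theorem dist_p1_p2 : dist p1 p2 = 1 := by
  norm_num [p1, p2, EuclideanSpace.dist_eq, Fin.sum_univ_two, Real.dist_eq, div_pow]

theorem dist_p0_p2 : dist p0 p2 = 1 := by
  norm_num [p0, p2, EuclideanSpace.dist_eq, Fin.sum_univ_two, Real.dist_eq, div_pow]

theorem affineIndependent_vertices : AffineIndependent ℝ ![p0, p1, p2] := by
  rw [affineIndependent_iff_not_collinear_set]
  apply not_collinear_of_dist_lt <;> norm_num [dist_p0_p1, dist_p1_p2, dist_p0_p2]

/-- The vertices `p0, p1, p2` of `Dtri` as an affine basis of the plane, whose coordinates are the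
barycentric coordinates of the reference triangle. -/
def triangleBasis : AffineBasis (Fin 3) ℝ E2 :=
  ⟨![p0, p1, p2], affineIndependent_vertices, by
    rw [affineIndependent_vertices.affineSpan_eq_top_iff_card_eq_finrank_add_one]
    simp⟩

theorem range_triangleBasis : range triangleBasis = {p0, p1, p2} := by
  change range ![p0, p1, p2] = _
  simp only [Matrix.range_cons, Matrix.range_empty, union_empty, singleton_union]

theorem Dtri_eq_convexHull : Dtri = convexHull ℝ (range triangleBasis) := by
  rw [Dtri, range_triangleBasis]

theorem isCompact_Dtri : IsCompact Dtri :=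
  (toFinite _).isCompact_convexHull ℝ

theorem mem_Dtri_iff {z : E2} : z ∈ Dtri ↔ ∀ a, 0 ≤ triangleBasis.coord a z := by
  rw [Dtri_eq_convexHull, AffineBasis.convexHull_eq_nonneg_coord, mem_ofPred]

theorem mem_Do_iff {z : E2} : z ∈ Do ↔ ∀ a, 0 < triangleBasis.coord a z := by
  rw [Do, Dtri_eq_convexHull, AffineBasis.interior_convexHull, mem_ofPred]

theorem mem_V0_iff {z : E2} : z ∈ V0 ↔ ∃ a, triangleBasis a = z := by
  rw [V0, ← range_triangleBasis, mem_range]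

theorem mem_E0_iff {e : Set E2} :
    e ∈ E0 ↔ ∃ a b, a ≠ b ∧ e = segment ℝ (triangleBasis a) (triangleBasis b) := by
  constructor
  · rintro (rfl | rfl | rfl)
    exacts [⟨0, 1, by decide, rfl⟩, ⟨1, 2, by decide, rfl⟩, ⟨0, 2, by decide, rfl⟩]
  · rintro ⟨a, b, hab, rfl⟩
    wlog hlt : a < b generalizing a b
    · rw [segment_symm]
      exact this b a hab.symm (hab.lt_or_gt.resolve_left hlt)
    fin_cases a <;> fin_cases b <;> simp at hlt
    exacts [Or.inl rfl, Or.inr (Or.inr rfl), Or.inr (Or.inl rfl)]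

theorem contDiff_coord (a : Fin 3) : ContDiff ℝ 1 (triangleBasis.coord a) :=
  (smooth_barycentric_coord triangleBasis a).of_le le_top

/-- The point dividing the edge of `Dtri` from vertex `a` to vertex `b` at parameter `t`. -/
def edgePoint (a b : Fin 3) (t : ℝ) : E2 :=
  AffineMap.lineMap (triangleBasis a) (triangleBasis b) t

@[simp]
theorem edgePoint_zero (a b : Fin 3) : edgePoint a b 0 = triangleBasis a :=
  AffineMap.lineMap_apply_zero _ _

@[simp]
theorem edgePoint_one (a b : Fin 3) : edgePoint a b 1 = triangleBasis b :=
  AffineMap.lineMap_apply_one _ _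

theorem edgePoint_one_sub (a b : Fin 3) (t : ℝ) : edgePoint a b (1 - t) = edgePoint b a t :=
  AffineMap.lineMap_apply_one_sub _ _ _

theorem coord_edgePoint (a b c : Fin 3) (t : ℝ) :
    triangleBasis.coord c (edgePoint a b t) =
      (1 - t) * (if c = a then 1 else 0) + t * (if c = b then 1 else 0) :=
  coord_lineMap_basis triangleBasis a b c t

theorem coord_left_edgePoint {a b : Fin 3} (hab : a ≠ b) (t : ℝ) :
    triangleBasis.coord a (edgePoint a b t) = 1 - t := by
  simp [coord_edgePoint, hab]

theorem coord_right_edgePoint {a b : Fin 3} (hab : a ≠ b) (t : ℝ) :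
    triangleBasis.coord b (edgePoint a b t) = t := by
  simp [coord_edgePoint, hab.symm]

theorem coord_edgePoint_of_ne {a b c : Fin 3} (hca : c ≠ a) (hcb : c ≠ b) (t : ℝ) :
    triangleBasis.coord c (edgePoint a b t) = 0 := by
  simp [coord_edgePoint, hca, hcb]

theorem edgePoint_injective {a b : Fin 3} (hab : a ≠ b) : Function.Injective (edgePoint a b) :=
  AffineMap.lineMap_injective ℝ (triangleBasis.ind.injective.ne hab)

theorem segment_eq_image_edgePoint (a b : Fin 3) :
    segment ℝ (triangleBasis a) (triangleBasis b) = edgePoint a b '' Icc 0 1 :=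
  segment_eq_image_lineMap ℝ _ _

theorem edgePoint_mem_Dtri (a b : Fin 3) {t : ℝ} (ht : t ∈ Icc (0 : ℝ) 1) :
    edgePoint a b t ∈ Dtri := by
  rw [Dtri_eq_convexHull]
  refine segment_subset_convexHull (mem_range_self a) (mem_range_self b) ?_
  rw [segment_eq_image_edgePoint]
  exact mem_image_of_mem _ ht

theorem vertex_mem_Dtri (a : Fin 3) : triangleBasis a ∈ Dtri :=
  edgePoint_zero a a ▸ edgePoint_mem_Dtri a a unitInterval.zero_mem

theorem edgePoint_notMem_V0 {a b : Fin 3} (hab : a ≠ b) {t : ℝ} (ht : t ∈ Ioo (0 : ℝ) 1) :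
    edgePoint a b t ∉ V0 := by
  rw [mem_V0_iff]
  rintro ⟨c, hc⟩
  have ha := coord_left_edgePoint hab t
  have hb := coord_right_edgePoint hab t
  rw [← hc, AffineBasis.coord_apply] at ha hb
  split_ifs at ha hb <;> linarith [ht.1, ht.2]

theorem eo_segment {a b : Fin 3} (hab : a ≠ b) :
    eo (segment ℝ (triangleBasis a) (triangleBasis b)) = edgePoint a b '' Ioo 0 1 := by
  rw [eo, segment_eq_image_edgePoint]
  ext z
  constructor
  · rintro ⟨⟨t, ht, rfl⟩, hV⟩
    rw [mem_V0_iff, not_exists] at hV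
    refine ⟨t, ⟨ht.1.lt_of_ne' ?_, ht.2.lt_of_ne ?_⟩, rfl⟩
    · rintro rfl
      exact hV a (edgePoint_zero a b).symm
    · rintro rfl
      exact hV b (edgePoint_one a b).symm
  · rintro ⟨t, ht, rfl⟩
    exact ⟨mem_image_of_mem _ (Ioo_subset_Icc_self ht), edgePoint_notMem_V0 hab ht⟩

theorem eq_vertex_or_eq_edgePoint_or_mem_Do {z : E2} (hz : z ∈ Dtri) :
    (∃ a, z = triangleBasis a) ∨ (∃ a b, a ≠ b ∧ ∃ t ∈ Ioo (0 : ℝ) 1, z = edgePoint a b t) ∨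
      z ∈ Do := by
  rw [mem_Dtri_iff] at hz
  by_cases hpos : ∀ a, 0 < triangleBasis.coord a z
  · exact Or.inr (Or.inr (mem_Do_iff.2 hpos))
  obtain ⟨c, hc⟩ := not_forall.1 hpos
  obtain ⟨a, b, hab, hne⟩ : ∃ a b : Fin 3, a ≠ b ∧ ∀ d, d ≠ a ∧ d ≠ b → d = c := by
    clear hc
    revert c
    decide
  have hedge : z = edgePoint a b (triangleBasis.coord b z) :=
    eq_lineMap_of_coord_eq_zero triangleBasis hab fun d hd =>
      hne d hd ▸ le_antisymm (not_lt.1 hc) (hz c)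
  have hone : triangleBasis.coord a z = 1 - triangleBasis.coord b z := by
    conv_lhs => rw [hedge, coord_left_edgePoint hab]
  rcases (hz b).eq_or_lt' with h0 | h0
  · exact Or.inl ⟨a, by rw [hedge, h0, edgePoint_zero]⟩
  rcases (hz a).eq_or_lt' with h1 | h1
  · exact Or.inl ⟨b, by rw [hedge, show triangleBasis.coord b z = 1 by linarith, edgePoint_one]⟩
  · exact Or.inr (Or.inl ⟨a, b, hab, _, ⟨h0, by linarith⟩, hedge⟩)

end ReferenceTriangle

section Realization

variable {l : Set E2 → ℝ}

theorem TriIneq.e02_lt (h : TriIneq l) : l e02 < l e01 + l e12 :=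
  h.2 e01 e12 e02 rfl

theorem TriIneq.e12_lt (h : TriIneq l) : l e12 < l e01 + l e02 :=
  h.2 e01 e02 e12 (by rw [E0, pair_comm e02])

theorem TriIneq.e01_lt (h : TriIneq l) : l e01 < l e02 + l e12 :=
  h.2 e02 e12 e01 (by rw [E0, pair_comm e12, insert_comm, pair_comm e02])

theorem TriIneq.exists_realizes (h : TriIneq l) : ∃ f, Realizes f l := by
  obtain ⟨x, y, z, hxy, hyz, hxz⟩ := exists_dist_eq_of_triangle_le (E := E2)
    (Module.lt_rank_of_lt_finrank (by simp)) (by linarith [h.e01_lt] : l e01 ≤ l e12 + l e02)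
    h.e12_lt.le (by linarith [h.e02_lt])
  obtain ⟨f, hf⟩ := exists_linearMap_vsub_eq triangleBasis ![x, y, z]
  have hdist : ∀ a b, dist (f (triangleBasis a)) (f (triangleBasis b)) =
      dist (![x, y, z] a) (![x, y, z] b) := fun a b => by
    rw [dist_eq_norm, ← map_sub, ← vsub_eq_sub, hf, ← dist_eq_norm_vsub]
  exact ⟨f, (hdist 0 1).trans hxy, (hdist 1 2).trans hyz, (hdist 0 2).trans hxz⟩

theorem Realizes.injective {f : E2 →ₗ[ℝ] E2} (hf : Realizes f l) (h : TriIneq l) :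
    Function.Injective f := by
  obtain ⟨h01, h12, h02⟩ := hf
  have himage : (fun a => f (triangleBasis a)) = ![f p0, f p1, f p2] := by
    ext1 a
    fin_cases a <;> rfl
  refine injective_of_affineIndependent_image triangleBasis f ?_
  rw [himage, affineIndependent_iff_not_collinear_set]
  apply not_collinear_of_dist_lt <;> rw [h01, h12, h02]
  exacts [h.e12_lt, h.e02_lt, h.e01_lt]

theorem dD_nonneg (l : Set E2 → ℝ) (z w : E2) : 0 ≤ dD l z w := by
  unfold dD
  split_ifs
  exacts [dist_nonneg, le_rfl]

theorem dD_comm (l : Set E2 → ℝ) (z w : E2) : dD l z w = dD l w z := by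
  unfold dD
  split_ifs
  exacts [dist_comm _ _, rfl]

theorem TriIneq.exists_dist_le_mul_dD (h : TriIneq l) :
    ∃ K : ℝ≥0, ∀ z w, dist z w ≤ K * dD l z w := by
  have hex := h.exists_realizes
  obtain ⟨K, -, hK⟩ := hex.choose.exists_antilipschitzWith
    (LinearMap.ker_eq_bot.2 (hex.choose_spec.injective h))
  refine ⟨K, fun z w => ?_⟩
  rw [dD, dif_pos hex]
  exact hK.le_mul_dist z w

theorem TriIneq.exists_dist_apply_le_mul_dD {X : Type*} [PseudoMetricSpace X] (h : TriIneq l)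
    {φ : E2 → X} (hφ : LocallyLipschitz φ) :
    ∃ C : ℝ≥0, ∀ z ∈ Dtri, ∀ w ∈ Dtri, dist (φ z) (φ w) ≤ C * dD l z w := by
  obtain ⟨K, hK⟩ := h.exists_dist_le_mul_dD
  obtain ⟨L, hL⟩ := hφ.locallyLipschitzOn.exists_lipschitzOnWith_of_compact isCompact_Dtri
  refine ⟨L * K, fun z hz w hw => ?_⟩
  calc dist (φ z) (φ w) ≤ L * dist z w := hL.dist_le_mul z hz w hw
    _ ≤ L * (K * dD l z w) := by gcongr; exact hK z w
    _ = ↑(L * K) * dD l z w := by rw [NNReal.coe_mul, mul_assoc]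

end Realization

section Chains

variable {T : Triangulation S n} {l : Set S → ℝ}

theorem TriIneqT.triIneq_lRes (hl : TriIneqT T l) (i : Fin n) : TriIneq (lRes T l i) :=
  ⟨hl.1 i, hl.2 i⟩

theorem Triangulation.exists_mem_image (T : Triangulation S n) (x : S) :
    ∃ i, x ∈ T.σ i '' Dtri := by
  have hV : V0 ⊆ Dtri := subset_convexHull ℝ _
  rcases T.cover.symm ▸ mem_univ x with (hx | hx) | hx
  · obtain ⟨i, hx⟩ := mem_iUnion.1 hx
    exact ⟨i, image_mono hV hx⟩
  · obtain ⟨i, hx⟩ := mem_iUnion.1 hx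
    exact ⟨i, image_mono interior_subset hx⟩
  · obtain ⟨i, hx⟩ := mem_iUnion.1 hx
    obtain ⟨e, he, hx⟩ := mem_iUnion₂.1 hx
    obtain ⟨a, b, hab, rfl⟩ := mem_E0_iff.1 he
    rw [eo_segment hab] at hx
    refine ⟨i, image_mono ?_ hx⟩
    rintro _ ⟨t, ht, rfl⟩
    exact edgePoint_mem_Dtri a b (Ioo_subset_Icc_self ht)

theorem dTri_nonneg (i : Fin n) (x y : S) : 0 ≤ dTri T l i x y := by
  refine Real.sInf_nonneg ?_
  rintro _ ⟨z, -, w, -, -, -, rfl⟩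
  exact dD_nonneg _ z w

theorem dTri_comm (i : Fin n) (x y : S) : dTri T l i x y = dTri T l i y x := by
  have hle : ∀ x y : S, {r | ∃ z ∈ Dtri, ∃ w ∈ Dtri,
      T.σ i z = x ∧ T.σ i w = y ∧ r = dD (lRes T l i) z w} ⊆
      {r | ∃ z ∈ Dtri, ∃ w ∈ Dtri, T.σ i z = y ∧ T.σ i w = x ∧ r = dD (lRes T l i) z w} := by
    rintro x y _ ⟨z, hz, w, hw, hx, hy, rfl⟩
    exact ⟨w, hw, z, hz, hy, hx, dD_comm _ z w⟩
  exact congrArg sInf ((hle x y).antisymm (hle y x))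

theorem zero_mem_chainSums (x : S) : 0 ∈ chainSums T l x x := by
  obtain ⟨i, -⟩ := T.exists_mem_image x
  exact ⟨0, fun _ => x, fun _ => i, rfl, rfl, by simp, by simp⟩

theorem cons_mem_chainSums {i : Fin n} {x y z : S} {r : ℝ} (hx : x ∈ T.σ i '' Dtri)
    (hy : y ∈ T.σ i '' Dtri) (hr : r ∈ chainSums T l y z) :
    dTri T l i x y + r ∈ chainSums T l x z := by
  obtain ⟨k, c, idx, rfl, hk, hc, rfl⟩ := hr
  refine ⟨k + 1, fun j => Nat.casesOn j x c, fun j => Nat.casesOn j i idx, rfl, hk, ?_, ?_⟩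
  · rintro (_ | j) hj
    exacts [⟨hx, hy⟩, hc j (Nat.lt_of_succ_lt_succ hj)]
  · rw [Finset.sum_range_succ']
    exact add_comm _ _

theorem dTri_mem_chainSums {i : Fin n} {x y : S} (hx : x ∈ T.σ i '' Dtri)
    (hy : y ∈ T.σ i '' Dtri) : dTri T l i x y ∈ chainSums T l x y := by
  simpa only [add_zero] using cons_mem_chainSums hx hy (zero_mem_chainSums y)

theorem chainSums_induction {motive : S → S → ℝ → Prop} (refl : ∀ x, motive x x 0)
    (cons : ∀ i x y z r, x ∈ T.σ i '' Dtri → y ∈ T.σ i '' Dtri → motive y z r →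
      motive x z (dTri T l i x y + r))
    {x y : S} {r : ℝ} (hr : r ∈ chainSums T l x y) : motive x y r := by
  obtain ⟨k, c, idx, rfl, rfl, hc, rfl⟩ := hr
  induction k generalizing c idx with
  | zero => simpa using refl (c 0)
  | succ k ih =>
    rw [Finset.sum_range_succ', add_comm (Finset.sum _ _)]
    exact cons _ _ _ _ _ (hc 0 k.succ_pos).1 (hc 0 k.succ_pos).2
      (ih (fun j => c (j + 1)) (fun j => idx (j + 1)) fun j hj => hc (j + 1) (Nat.succ_lt_succ hj))

theorem nonneg_of_mem_chainSums {x y : S} {r : ℝ} (hr : r ∈ chainSums T l x y) : 0 ≤ r :=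
  chainSums_induction (motive := fun _ _ r => 0 ≤ r) (fun _ => le_rfl)
    (fun i x y _ _ _ _ hr => add_nonneg (dTri_nonneg i x y) hr) hr

theorem add_mem_chainSums {x y z : S} {r s : ℝ} (hr : r ∈ chainSums T l x y)
    (hs : s ∈ chainSums T l y z) : r + s ∈ chainSums T l x z := by
  refine chainSums_induction (motive := fun x y r => s ∈ chainSums T l y z →
    r + s ∈ chainSums T l x z) (fun x hs => by rwa [zero_add]) ?_ hr hs
  intro i x y _ r hx hy ih hs
  rw [add_assoc]
  exact cons_mem_chainSums hx hy (ih hs)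

theorem mem_chainSums_symm {x y : S} {r : ℝ} (hr : r ∈ chainSums T l x y) :
    r ∈ chainSums T l y x := by
  refine chainSums_induction (motive := fun x y r => r ∈ chainSums T l y x)
    zero_mem_chainSums ?_ hr
  intro i x y _ r hx hy ih
  rw [add_comm, dTri_comm]
  exact add_mem_chainSums ih (dTri_mem_chainSums hy hx)

theorem chainSums_nonempty [T2Space S] [ConnectedSpace S] (T : Triangulation S n)
    (l : Set S → ℝ) (x y : S) : (chainSums T l x y).Nonempty := by
  have : IsTrans S fun x y => (chainSums T l x y).Nonempty :=
    ⟨fun _ _ _ ⟨_, hr⟩ ⟨_, hs⟩ => ⟨_, add_mem_chainSums hr hs⟩⟩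
  exact rel_of_finite_closed_cover (r := fun x y => (chainSums T l x y).Nonempty)
    (fun i => (isCompact_Dtri.image_of_continuousOn (T.continuousOn i)).isClosed)
    T.exists_mem_image (fun i _ hx _ hy => ⟨_, dTri_mem_chainSums hx hy⟩) x y

theorem bddBelow_chainSums (x y : S) : BddBelow (chainSums T l x y) :=
  ⟨0, fun _ => nonneg_of_mem_chainSums⟩

theorem dGlue_nonneg (x y : S) : 0 ≤ dGlue T l x y :=
  Real.sInf_nonneg fun _ => nonneg_of_mem_chainSums

theorem dGlue_self (x : S) : dGlue T l x x = 0 :=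
  le_antisymm (csInf_le (bddBelow_chainSums x x) (zero_mem_chainSums x)) (dGlue_nonneg x x)

theorem dGlue_comm (x y : S) : dGlue T l x y = dGlue T l y x :=
  congrArg sInf (Subset.antisymm (fun _ => mem_chainSums_symm) fun _ => mem_chainSums_symm)

theorem dGlue_triangle {x y z : S} (hxy : (chainSums T l x y).Nonempty)
    (hyz : (chainSums T l y z).Nonempty) : dGlue T l x z ≤ dGlue T l x y + dGlue T l y z := by
  unfold dGlue
  rw [← csInf_add hxy (bddBelow_chainSums x y) hyz (bddBelow_chainSums y z)]
  exact csInf_le_csInf (bddBelow_chainSums x z) (hxy.add hyz)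
    (add_subset_iff.2 fun _ hr _ hs => add_mem_chainSums hr hs)

theorem dist_le_mul_dGlue {X : Type*} [PseudoMetricSpace X] {Φ : S → X} {C : ℝ} (hC : 0 ≤ C)
    (hΦ : ∀ i, ∀ x ∈ T.σ i '' Dtri, ∀ y ∈ T.σ i '' Dtri, dist (Φ x) (Φ y) ≤ C * dTri T l i x y)
    {x y : S} (hxy : (chainSums T l x y).Nonempty) :
    dist (Φ x) (Φ y) ≤ C * dGlue T l x y := by
  refine le_mul_csInf hxy hC fun r hr => ?_
  refine chainSums_induction (motive := fun x y r => dist (Φ x) (Φ y) ≤ C * r) (by simp) ?_ hr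
  intro i x y z r hx hy ih
  calc dist (Φ x) (Φ z) ≤ dist (Φ x) (Φ y) + dist (Φ y) (Φ z) := dist_triangle _ _ _
    _ ≤ C * dTri T l i x y + C * r := add_le_add (hΦ i x hx y hy) ih
    _ = C * (dTri T l i x y + r) := (mul_add _ _ _).symm

namespace Triangulation

/-- A function on `S` is piecewise `C¹` if on each triangle it is given by a `C¹` function on the
plane. These are the test functions that separate the points of `S` while being Lipschitz for
`dGlue`. -/
def IsPiecewiseC1 (T : Triangulation S n) (Φ : S → ℝ) : Prop :=
  ∀ i, ∃ φ : E2 → ℝ, ContDiff ℝ 1 φ ∧ ∀ z ∈ Dtri, Φ (T.σ i z) = φ z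

variable {Φ : S → ℝ}

theorem IsPiecewiseC1.exists_dist_le_mul_dTri (hΦ : T.IsPiecewiseC1 Φ) (hl : TriIneqT T l)
    (i : Fin n) : ∃ C : ℝ≥0, ∀ x ∈ T.σ i '' Dtri, ∀ y ∈ T.σ i '' Dtri,
      dist (Φ x) (Φ y) ≤ C * dTri T l i x y := by
  obtain ⟨φ, hφ, hΦφ⟩ := hΦ i
  obtain ⟨C, hC⟩ := (hl.triIneq_lRes i).exists_dist_apply_le_mul_dD hφ.locallyLipschitz
  refine ⟨C, ?_⟩
  rintro _ ⟨z, hz, rfl⟩ _ ⟨w, hw, rfl⟩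
  refine le_mul_csInf ⟨_, z, hz, w, hw, rfl, rfl, rfl⟩ C.coe_nonneg ?_
  rintro _ ⟨z', hz', w', hw', hzz', hww', rfl⟩
  rw [← hzz', ← hww', hΦφ z' hz', hΦφ w' hw']
  exact hC z' hz' w' hw'

theorem IsPiecewiseC1.eq_of_dGlue_eq_zero (hΦ : T.IsPiecewiseC1 Φ) (hl : TriIneqT T l) {x y : S}
    (hne : (chainSums T l x y).Nonempty) (hxy : dGlue T l x y = 0) : Φ x = Φ y := by
  choose C hC using hΦ.exists_dist_le_mul_dTri hl
  obtain ⟨K, hK⟩ := Finite.exists_le C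
  refine dist_le_zero.1 ?_
  calc dist (Φ x) (Φ y) ≤ K * dGlue T l x y := by
        refine dist_le_mul_dGlue K.coe_nonneg (fun i x hx y hy => (hC i x hx y hy).trans ?_) hne
        exact mul_le_mul_of_nonneg_right (NNReal.coe_le_coe.2 (hK i)) (dTri_nonneg i x y)
    _ = 0 := by rw [hxy, mul_zero]

end Triangulation

end Chains

namespace Triangulation

variable (T : Triangulation S n)

/-- The edge of the `i`-th triangle from its vertex `a` to its vertex `b`, parametrized
proportionally. Two triangles are glued along an edge exactly if the two parametrizations, in
suitable directions, are equal. -/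
def edgePath (i : Fin n) (a b : Fin 3) (t : unitInterval) : S :=
  T.σ i (edgePoint a b t)

theorem edgePath_comp_symm (i : Fin n) (a b : Fin 3) :
    T.edgePath i a b ∘ unitInterval.symm = T.edgePath i b a :=
  funext fun t => congrArg (T.σ i) (edgePoint_one_sub a b t)

variable {T} {i j : Fin n} {a b a' b' : Fin 3} {z w : E2} {t u : ℝ}

theorem vertex_ne_interior (hw : w ∈ Do) : T.σ i (triangleBasis a) ≠ T.σ j w :=
  (T.disj_vert_int j).ne_of_mem
    (mem_iUnion_of_mem i (mem_image_of_mem _ (mem_V0_iff.2 ⟨a, rfl⟩))) (mem_image_of_mem _ hw)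

theorem edgePoint_mem_image_eo (hab : a ≠ b) (ht : t ∈ Ioo (0 : ℝ) 1) :
    T.σ i (edgePoint a b t) ∈
      T.σ i '' eo (segment ℝ (triangleBasis a) (triangleBasis b)) := by
  rw [eo_segment hab]
  exact mem_image_of_mem _ (mem_image_of_mem _ ht)

theorem vertex_ne_edgePoint (hab : a ≠ b) (ht : t ∈ Ioo (0 : ℝ) 1) {c : Fin 3} :
    T.σ i (triangleBasis c) ≠ T.σ j (edgePoint a b t) :=
  (T.disj_vert_edge j _ (mem_E0_iff.2 ⟨a, b, hab, rfl⟩)).ne_of_mem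
    (mem_iUnion_of_mem i (mem_image_of_mem _ (mem_V0_iff.2 ⟨c, rfl⟩)))
    (edgePoint_mem_image_eo hab ht)

theorem interior_ne_edgePoint (hz : z ∈ Do) (hab : a ≠ b) (ht : t ∈ Ioo (0 : ℝ) 1) :
    T.σ i z ≠ T.σ j (edgePoint a b t) :=
  (T.disj_int_edge i j _ (mem_E0_iff.2 ⟨a, b, hab, rfl⟩)).ne_of_mem (mem_image_of_mem _ hz)
    (edgePoint_mem_image_eo hab ht)

theorem eq_of_interior_eq (hz : z ∈ Do) (hw : w ∈ Do) (h : T.σ i z = T.σ j w) :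
    i = j ∧ z = w := by
  obtain rfl | hij := eq_or_ne i j
  · exact ⟨rfl, T.inj_int i hz hw h⟩
  · exact absurd h
      ((T.disj_int i j hij).ne_of_mem (mem_image_of_mem _ hz) (mem_image_of_mem _ hw))

theorem param_eq_of_edgePoint_eq (hab : a ≠ b) (ht : t ∈ Ioo (0 : ℝ) 1) (hu : u ∈ Ioo (0 : ℝ) 1)
    (h : T.σ i (edgePoint a b t) = T.σ i (edgePoint a b u)) : t = u := by
  have hinj := T.inj_edge i _ (mem_E0_iff.2 ⟨a, b, hab, rfl⟩)
  rw [eo_segment hab] at hinj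
  exact edgePoint_injective hab (hinj (mem_image_of_mem _ ht) (mem_image_of_mem _ hu) h)

theorem edgePath_ne_reverse (hab : a ≠ b) : T.edgePath i a b ≠ T.edgePath i b a := by
  intro h
  have hthird : T.σ i (edgePoint a b (1 / 3)) = T.σ i (edgePoint a b (1 - 1 / 3)) := by
    rw [edgePoint_one_sub]
    exact congrFun h ⟨1 / 3, by norm_num, by norm_num⟩
  have := param_eq_of_edgePoint_eq hab (by norm_num) (by norm_num) hthird
  norm_num at this

theorem edgePath_eq_or_eq_reverse (hab : a ≠ b) (hab' : a' ≠ b')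
    (h : T.σ i '' eo (segment ℝ (triangleBasis a) (triangleBasis b)) =
      T.σ j '' eo (segment ℝ (triangleBasis a') (triangleBasis b'))) :
    T.edgePath i a b = T.edgePath j a' b' ∨ T.edgePath i a b = T.edgePath j b' a' := by
  obtain ⟨A, hA, hσ⟩ := T.glue i j _ (mem_E0_iff.2 ⟨a, b, hab, rfl⟩) _
    (mem_E0_iff.2 ⟨a', b', hab', rfl⟩) h
  have hpath : ∀ c d, A (triangleBasis a) = triangleBasis c →
      A (triangleBasis b) = triangleBasis d → T.edgePath i a b = T.edgePath j c d := by
    intro c d hc hd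
    funext t
    have hAt : A (edgePoint a b t) = edgePoint c d t := by
      rw [edgePoint, AffineMap.apply_lineMap, hc, hd, edgePoint]
    rw [edgePath, edgePath, ← hAt, hσ]
    rw [segment_eq_image_edgePoint]
    exact mem_image_of_mem _ t.2
  rw [image_segment] at hA
  exact (endpoints_eq_of_segment_eq_segment hA).imp (fun h => hpath _ _ h.1 h.2)
    fun h => hpath _ _ h.1 h.2

theorem exists_edgePath_eq (hab : a ≠ b) (hab' : a' ≠ b') (ht : t ∈ Ioo (0 : ℝ) 1)
    (hu : u ∈ Ioo (0 : ℝ) 1) (h : T.σ i (edgePoint a b t) = T.σ j (edgePoint a' b' u)) :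
    ∃ c d, c ≠ d ∧ T.edgePath i a b = T.edgePath j c d ∧ edgePoint a' b' u = edgePoint c d t := by
  have himage := (T.edge_eq_or_disjoint i j _ (mem_E0_iff.2 ⟨a, b, hab, rfl⟩) _
    (mem_E0_iff.2 ⟨a', b', hab', rfl⟩)).resolve_right fun hdisj =>
      hdisj.ne_of_mem (edgePoint_mem_image_eo hab ht) (edgePoint_mem_image_eo hab' hu) h
  have hparam : ∀ c d s, c ≠ d → s ∈ Ioo (0 : ℝ) 1 → T.edgePath i a b = T.edgePath j c d →
      edgePoint a' b' u = edgePoint c d s → s = t := by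
    intro c d s hcd hs hpath hpoint
    have hpt := congrFun hpath ⟨t, Ioo_subset_Icc_self ht⟩
    exact param_eq_of_edgePoint_eq hcd hs ht (hpoint ▸ h.symm.trans hpt)
  rcases edgePath_eq_or_eq_reverse hab hab' himage with hpath | hpath
  · obtain rfl := hparam a' b' u hab' hu hpath rfl
    exact ⟨a', b', hab', hpath, rfl⟩
  · obtain rfl := hparam b' a' (1 - u) hab'.symm ⟨sub_pos.2 hu.2, sub_lt_self 1 hu.1⟩ hpath
      (edgePoint_one_sub b' a' u).symm
    exact ⟨b', a', hab'.symm, hpath, (edgePoint_one_sub b' a' u).symm⟩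

/-- A family of `C¹` functions on the plane, one for each triangle, that agree wherever the
triangulation identifies points and thus descend to a piecewise `C¹` function on `S`. -/
structure IsCompatibleC1 (T : Triangulation S n) (φ : Fin n → E2 → ℝ) : Prop where
  contDiff : ∀ i, ContDiff ℝ 1 (φ i)
  compatible : ∀ i j, ∀ z ∈ Dtri, ∀ w ∈ Dtri, T.σ i z = T.σ j w → φ i z = φ j w

theorem IsCompatibleC1.of_vertex_of_edge {φ : Fin n → E2 → ℝ} (hφ : ∀ i, ContDiff ℝ 1 (φ i))
    (hvertex : ∀ i j a b, T.σ i (triangleBasis a) = T.σ j (triangleBasis b) →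
      φ i (triangleBasis a) = φ j (triangleBasis b))
    (hedge : ∀ i j a b a' b', a ≠ b → a' ≠ b' → T.edgePath i a b = T.edgePath j a' b' →
      ∀ t, φ i (edgePoint a b t) = φ j (edgePoint a' b' t)) :
    T.IsCompatibleC1 φ where
  contDiff := hφ
  compatible := by
    intro i j z hz w hw h
    rcases eq_vertex_or_eq_edgePoint_or_mem_Do hz with ⟨a, rfl⟩ | ⟨a, b, hab, t, ht, rfl⟩ | hz <;>
      rcases eq_vertex_or_eq_edgePoint_or_mem_Do hw with
        ⟨a', rfl⟩ | ⟨a', b', hab', u, hu, rfl⟩ | hw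
    · exact hvertex i j a a' h
    · exact absurd h (vertex_ne_edgePoint hab' hu)
    · exact absurd h (vertex_ne_interior hw)
    · exact absurd h.symm (vertex_ne_edgePoint hab ht)
    · obtain ⟨c, d, hcd, hpath, hpoint⟩ := exists_edgePath_eq hab hab' ht hu h
      rw [hpoint]
      exact hedge i j a b c d hab hcd hpath t
    · exact absurd h.symm (interior_ne_edgePoint hw hab ht)
    · exact absurd h.symm (vertex_ne_interior hz)
    · exact absurd h (interior_ne_edgePoint hz hab' hu)
    · obtain ⟨rfl, rfl⟩ := eq_of_interior_eq hz hw h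
      rfl

theorem IsCompatibleC1.exists_isPiecewiseC1 {φ : Fin n → E2 → ℝ} (hφ : T.IsCompatibleC1 φ) :
    ∃ Φ, T.IsPiecewiseC1 Φ ∧ ∀ i, ∀ z ∈ Dtri, Φ (T.σ i z) = φ i z := by
  choose I Z hZ hσ using T.exists_mem_image
  have hΦ : ∀ i, ∀ z ∈ Dtri, φ (I (T.σ i z)) (Z (T.σ i z)) = φ i z := fun i z hz =>
    hφ.compatible _ i _ (hZ _) z hz (hσ _)
  exact ⟨fun x => φ (I x) (Z x), fun i => ⟨φ i, hφ.contDiff i, hΦ i⟩, hΦ⟩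

section TestFunctions

variable (T)

open scoped Classical in
/-- The piecewise linear function on `S` that is `1` at the vertex `v` and `0` at all others, in
the coordinates of the `i`-th triangle. -/
def vertexFun (v : S) (i : Fin n) (z : E2) : ℝ :=
  ∑ a with T.σ i (triangleBasis a) = v, triangleBasis.coord a z

open scoped Classical in
/-- A function supported near the edge parametrized by `γ`, in the coordinates of the `i`-th
triangle. It vanishes at the vertices, and its asymmetry (a square on one factor) makes `γ` and its
reverse together determine a point of the edge. -/
def edgeFun (γ : unitInterval → S) (i : Fin n) (z : E2) : ℝ :=
  ∑ p ∈ Finset.univ.offDiag, if T.edgePath i p.1 p.2 = γ then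
    triangleBasis.coord p.1 z ^ 2 * triangleBasis.coord p.2 z else 0

/-- The product of `h` with the cubic bubble of the triangle `i₀`, extended by `0` to the other
triangles. -/
def bubbleFun (i₀ : Fin n) (h : E2 → ℝ) (i : Fin n) (z : E2) : ℝ :=
  if i = i₀ then h z * ∏ a, triangleBasis.coord a z else 0

open scoped Classical in
theorem vertexFun_edgePoint (v : S) (i : Fin n) (a b : Fin 3) (t : ℝ) :
    T.vertexFun v i (edgePoint a b t) = (1 - t) * (if T.σ i (triangleBasis a) = v then 1 else 0) +
      t * (if T.σ i (triangleBasis b) = v then 1 else 0) := by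
  simp only [vertexFun, coord_edgePoint, Finset.sum_add_distrib, ← Finset.mul_sum,
    Finset.sum_ite_eq', Finset.mem_filter_univ]

open scoped Classical in
theorem vertexFun_vertex (v : S) (i : Fin n) (a : Fin 3) :
    T.vertexFun v i (triangleBasis a) = if T.σ i (triangleBasis a) = v then 1 else 0 := by
  simpa using T.vertexFun_edgePoint v i a a 0

theorem isCompatibleC1_vertexFun (v : S) : T.IsCompatibleC1 (T.vertexFun v) := by
  refine .of_vertex_of_edge (fun i => ?_) (fun i j a b h => ?_)
    fun i j a b a' b' _ _ hpath t => ?_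
  · exact ContDiff.sum fun a _ => contDiff_coord a
  · rw [vertexFun_vertex, vertexFun_vertex, h]
  · have hleft : T.σ i (triangleBasis a) = T.σ j (triangleBasis a') := by
      simpa [edgePath] using congrFun hpath 0
    have hright : T.σ i (triangleBasis b) = T.σ j (triangleBasis b') := by
      simpa [edgePath] using congrFun hpath 1
    rw [vertexFun_edgePoint, vertexFun_edgePoint, hleft, hright]

open scoped Classical in
theorem edgeFun_edgePoint (γ : unitInterval → S) (i : Fin n) {a b : Fin 3} (hab : a ≠ b) (t : ℝ) :
    T.edgeFun γ i (edgePoint a b t) = (if T.edgePath i a b = γ then (1 - t) ^ 2 * t else 0) +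
      if T.edgePath i b a = γ then t ^ 2 * (1 - t) else 0 := by
  rw [edgeFun, Finset.sum_eq_add_of_mem (a, b) (b, a) (by simpa using hab)
    (by simpa using hab.symm) (by simp [hab])]
  · simp only [coord_left_edgePoint hab, coord_right_edgePoint hab]
  · rintro ⟨c, d⟩ hcd hne
    rw [Finset.mem_offDiag] at hcd
    have hthird : (c ≠ a ∧ c ≠ b) ∨ (d ≠ a ∧ d ≠ b) := by grind
    rcases hthird with h | h <;> simp [coord_edgePoint_of_ne h.1 h.2]

theorem edgeFun_vertex (γ : unitInterval → S) (i : Fin n) (a : Fin 3) :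
    T.edgeFun γ i (triangleBasis a) = 0 := by
  classical
  obtain ⟨b, hb⟩ := exists_ne a
  simpa using T.edgeFun_edgePoint γ i hb.symm 0

theorem isCompatibleC1_edgeFun (γ : unitInterval → S) : T.IsCompatibleC1 (T.edgeFun γ) := by
  classical
  refine .of_vertex_of_edge (fun i => ?_) (fun i j a b _ => ?_)
    fun i j a b a' b' hab hab' hpath t => ?_
  · refine ContDiff.sum fun p _ => ?_
    split_ifs
    exacts [((contDiff_coord p.1).pow 2).mul (contDiff_coord p.2), contDiff_const]
  · rw [edgeFun_vertex, edgeFun_vertex]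
  · rw [edgeFun_edgePoint T γ i hab, edgeFun_edgePoint T γ j hab', ← edgePath_comp_symm T i a b,
      ← edgePath_comp_symm T j a' b', hpath]

variable {T} in
theorem bubbleFun_edgePoint (i₀ : Fin n) (h : E2 → ℝ) (i : Fin n) (a b : Fin 3) (t : ℝ) :
    bubbleFun i₀ h i (edgePoint a b t) = 0 := by
  obtain ⟨c, hca, hcb⟩ : ∃ c, c ≠ a ∧ c ≠ b := by
    revert a b
    decide
  have hprod : ∏ d, triangleBasis.coord d (edgePoint a b t) = 0 :=
    Finset.prod_eq_zero (Finset.mem_univ c) (coord_edgePoint_of_ne hca hcb t)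
  rw [bubbleFun, hprod, mul_zero, ite_self]

theorem isCompatibleC1_bubbleFun (i₀ : Fin n) {h : E2 → ℝ} (hh : ContDiff ℝ 1 h) :
    T.IsCompatibleC1 (bubbleFun i₀ h) := by
  refine .of_vertex_of_edge (fun i => ?_) (fun i j a b _ => ?_) fun i j a b a' b' _ _ _ t => ?_
  · unfold bubbleFun
    split_ifs
    exacts [hh.mul (contDiff_prod fun a _ => contDiff_coord a), contDiff_const]
  · rw [← edgePoint_zero a a, ← edgePoint_zero b b, bubbleFun_edgePoint, bubbleFun_edgePoint]
  · rw [bubbleFun_edgePoint, bubbleFun_edgePoint]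

end TestFunctions

section Separation

/-- No piecewise `C¹` function tells `x` and `y` apart. -/
def IsIndistinguishable (T : Triangulation S n) (x y : S) : Prop :=
  ∀ Φ, T.IsPiecewiseC1 Φ → Φ x = Φ y

theorem IsIndistinguishable.symm {x y : S} (h : T.IsIndistinguishable x y) :
    T.IsIndistinguishable y x :=
  fun Φ hΦ => (h Φ hΦ).symm

theorem IsCompatibleC1.eq_of_isIndistinguishable {φ : Fin n → E2 → ℝ} (hφ : T.IsCompatibleC1 φ)
    (hz : z ∈ Dtri) (hw : w ∈ Dtri) (h : T.IsIndistinguishable (T.σ i z) (T.σ j w)) :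
    φ i z = φ j w := by
  obtain ⟨Φ, hΦ, hΦφ⟩ := hφ.exists_isPiecewiseC1
  rw [← hΦφ i z hz, ← hΦφ j w hw, h Φ hΦ]

theorem IsIndistinguishable.eq_of_interior (hz : z ∈ Do) (hw : w ∈ Dtri)
    (h : T.IsIndistinguishable (T.σ i z) (T.σ j w)) : T.σ i z = T.σ j w := by
  have hbubble : ∀ g : E2 → ℝ, ContDiff ℝ 1 g → bubbleFun i g i z = bubbleFun i g j w :=
    fun g hg => (T.isCompatibleC1_bubbleFun i hg).eq_of_isIndistinguishable
      (interior_subset hz) hw h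
  have hpos : 0 < ∏ a, triangleBasis.coord a z :=
    Finset.prod_pos fun a _ => mem_Do_iff.1 hz a
  have hone := hbubble (fun _ => 1) contDiff_const
  rcases eq_or_ne j i with rfl | hji
  · simp only [bubbleFun, if_true, one_mul] at hone
    refine congrArg (T.σ j) (triangleBasis.ext_elem fun a => ?_)
    have hcoord := hbubble (triangleBasis.coord a) (contDiff_coord a)
    simp only [bubbleFun, if_true, ← hone] at hcoord
    exact mul_right_cancel₀ hpos.ne' hcoord
  · simp only [bubbleFun, if_true, if_neg hji, one_mul] at hone
    exact absurd hone hpos.ne'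

theorem IsIndistinguishable.eq_of_edgePath_eq (hab : a ≠ b) (hab' : a' ≠ b')
    (hpath : T.edgePath j a' b' = T.edgePath i a b) (ht : t ∈ Ioo (0 : ℝ) 1)
    (hu : u ∈ Icc (0 : ℝ) 1)
    (h : T.IsIndistinguishable (T.σ i (edgePoint a b t)) (T.σ j (edgePoint a' b' u))) :
    T.σ i (edgePoint a b t) = T.σ j (edgePoint a' b' u) := by
  classical
  have hrev : T.edgePath j b' a' = T.edgePath i b a := by
    rw [← T.edgePath_comp_symm, hpath, T.edgePath_comp_symm]
  have hedge : ∀ γ, T.edgeFun γ i (edgePoint a b t) = T.edgeFun γ j (edgePoint a' b' u) :=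
    fun γ => (T.isCompatibleC1_edgeFun γ).eq_of_isIndistinguishable
      (edgePoint_mem_Dtri a b (Ioo_subset_Icc_self ht)) (edgePoint_mem_Dtri a' b' hu) h
  have hforward := hedge (T.edgePath i a b)
  have hbackward := hedge (T.edgePath i b a)
  simp only [T.edgeFun_edgePoint _ _ hab, T.edgeFun_edgePoint _ _ hab', hpath, hrev, if_true,
    edgePath_ne_reverse hab, edgePath_ne_reverse hab.symm, if_false, add_zero, zero_add]
    at hforward hbackward
  -- The values `(1 - t) ^ 2 * t` and `t ^ 2 * (1 - t)` sum to `t * (1 - t)`, and dividing the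
  -- second one by this sum recovers `t`.
  have hsum : t * (1 - t) = u * (1 - u) := by linear_combination hforward + hbackward
  obtain rfl : t = u := by
    refine mul_right_cancel₀ (mul_pos ht.1 (sub_pos.2 ht.2)).ne' ?_
    linear_combination hbackward - u * hsum
  exact congrFun hpath.symm ⟨t, hu⟩

theorem IsIndistinguishable.eq_of_edge (hab : a ≠ b) (ht : t ∈ Ioo (0 : ℝ) 1) (hw : w ∈ Dtri)
    (hwDo : w ∉ Do) (h : T.IsIndistinguishable (T.σ i (edgePoint a b t)) (T.σ j w)) :
    T.σ i (edgePoint a b t) = T.σ j w := by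
  classical
  have hne : T.edgeFun (T.edgePath i a b) j w ≠ 0 := by
    rw [← (T.isCompatibleC1_edgeFun _).eq_of_isIndistinguishable
      (edgePoint_mem_Dtri a b (Ioo_subset_Icc_self ht)) hw h, T.edgeFun_edgePoint _ _ hab,
      if_pos rfl, if_neg (edgePath_ne_reverse hab.symm), add_zero]
    exact mul_ne_zero (pow_ne_zero 2 (sub_pos.2 ht.2).ne') ht.1.ne'
  rcases eq_vertex_or_eq_edgePoint_or_mem_Do hw with ⟨c, rfl⟩ | ⟨c, d, hcd, u, hu, rfl⟩ | hw
  · exact absurd (T.edgeFun_vertex _ j c) hne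
  · by_cases hforward : T.edgePath j c d = T.edgePath i a b
    · exact h.eq_of_edgePath_eq hab hcd hforward ht (Ioo_subset_Icc_self hu)
    by_cases hbackward : T.edgePath j d c = T.edgePath i a b
    · rw [← edgePoint_one_sub d c] at h ⊢
      exact h.eq_of_edgePath_eq hab hcd.symm hbackward ht
        ⟨sub_nonneg.2 hu.2.le, sub_le_self 1 hu.1.le⟩
    · simp [T.edgeFun_edgePoint _ _ hcd, hforward, hbackward] at hne
  · exact absurd hw hwDo

theorem IsIndistinguishable.eq_of_vertex
    (h : T.IsIndistinguishable (T.σ i (triangleBasis a)) (T.σ j (triangleBasis b))) :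
    T.σ i (triangleBasis a) = T.σ j (triangleBasis b) := by
  have hvertex := (T.isCompatibleC1_vertexFun (T.σ j (triangleBasis b))).eq_of_isIndistinguishable
    (vertex_mem_Dtri a) (vertex_mem_Dtri b) h
  by_contra hne
  simp [vertexFun_vertex, hne] at hvertex

theorem IsIndistinguishable.eq {x y : S} (h : T.IsIndistinguishable x y) : x = y := by
  obtain ⟨i, z, hz, rfl⟩ := T.exists_mem_image x
  obtain ⟨j, w, hw, rfl⟩ := T.exists_mem_image y
  by_cases hzDo : z ∈ Do
  · exact h.eq_of_interior hzDo hw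
  by_cases hwDo : w ∈ Do
  · exact (h.symm.eq_of_interior hwDo hz).symm
  rcases eq_vertex_or_eq_edgePoint_or_mem_Do hz with ⟨a, rfl⟩ | ⟨a, b, hab, t, ht, rfl⟩ | hz'
  · rcases eq_vertex_or_eq_edgePoint_or_mem_Do hw with ⟨c, rfl⟩ | ⟨c, d, hcd, u, hu, rfl⟩ | hw'
    · exact h.eq_of_vertex
    · exact (h.symm.eq_of_edge hcd hu hz hzDo).symm
    · exact absurd hw' hwDo
  · exact h.eq_of_edge hab ht hw hwDo
  · exact absurd hz' hzDo

end Separation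

end Triangulation

theorem eq_of_dGlue_eq_zero {T : Triangulation S n} {l : Set S → ℝ} (hl : TriIneqT T l)
    {x y : S} (hne : (chainSums T l x y).Nonempty) (hxy : dGlue T l x y = 0) : x = y :=
  Triangulation.IsIndistinguishable.eq fun _ hΦ => hΦ.eq_of_dGlue_eq_zero hl hne hxy

/-- `d[l]` is a metric on `S`: it is (a) finite (the defining set of chain
sums is nonempty), (b) nonnegative, (c) zero exactly on the diagonal, (d) symmetric, and
(e) satisfies the triangle inequality. -/
theorem dGlue_is_metric
    {S : Type} [TopologicalSpace S] [CompactSpace S] [T2Space S] [ConnectedSpace S]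
    {n : ℕ} (T : Triangulation S n) (l : Set S → ℝ) (hl : TriIneqT T l) :
    ∀ x y z : S,
      (chainSums T l x y).Nonempty ∧
      0 ≤ dGlue T l x y ∧
      (dGlue T l x y = 0 ↔ x = y) ∧
      dGlue T l x y = dGlue T l y x ∧
      dGlue T l x z ≤ dGlue T l x y + dGlue T l y z := by
  have hne := chainSums_nonempty T l
  refine fun x y z => ⟨hne x y, dGlue_nonneg x y, ⟨eq_of_dGlue_eq_zero hl (hne x y), ?_⟩,
    dGlue_comm x y, dGlue_triangle (hne x y) (hne y z)⟩
  rintro rfl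
  exact dGlue_self x
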